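/- Let (t, n, b) be a smooth right-handed orthonormal frame on an open set U ⊆ ℝ³ with Ω_b = 0 identically on U. Let α be smooth and nowhere zero, μ smooth with ∂_s μ = Ω_n + μ Ω_nb on U (Riccati equation with Ω_b = 0), and J = α(n + μb). Suppose there are smooth scalar functions H₁, H₂ and a smooth nowhere-zero vector field v on U with v = J × ∇H₁, v = b × ∇H₂ and t = v/‖v‖. Then J and b are compatible Poisson vectors: J·(curl b) + b·(curl J) = 0 on U. -/

import Mathlib

/-!
Write `J = α (n + μ b)`. The divergence of `v`, computed from each of its two Hamiltonian forms
(`divg_cross_grad`), gives `curl J · ∇H₁ = div v = curl b · ∇H₂`; call this number `k`. Both `J`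
(by the Riccati equation, `poisson_of_riccati`) and `b` (by `Ω_b = 0`) are orthogonal to their own
curls, so expanding `curl J × (J × ∇H₁)` and `curl b × (b × ∇H₂)` yields
`curl J × v = k J` and `curl b × v = k b`. With `v = ‖v‖ t`, pairing the first with `n` and the
second with `b` gives `‖v‖ (b · curl J) = k α` and `‖v‖ (n · curl b) = -k`
(`smul_dot_cross`). As `J · curl b = α (n · curl b)`, the two terms of the claim cancel.
-/

noncomputable section

/-- Three-dimensional Euclidean space. -/
abbrev E3 : Type := EuclideanSpace ℝ (Fin 3)

/-- The Euclidean dot product on ℝ³. -/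
def dot (u v : E3) : ℝ := ∑ i, u i * v i

/-- The cross product on ℝ³. -/
def cross (u v : E3) : E3 :=
  (WithLp.equiv 2 (Fin 3 → ℝ)).symm
    ![u 1 * v 2 - u 2 * v 1, u 2 * v 0 - u 0 * v 2, u 0 * v 1 - u 1 * v 0]

/-- Partial derivative of a scalar function in the `i`-th coordinate direction. -/
def pd (i : Fin 3) (f : E3 → ℝ) (x : E3) : ℝ :=
  fderiv ℝ f x (EuclideanSpace.single i 1)

/-- The gradient ∇f of a scalar function. -/
def grad (f : E3 → ℝ) (x : E3) : E3 :=
  (WithLp.equiv 2 (Fin 3 → ℝ)).symm ![pd 0 f x, pd 1 f x, pd 2 f x]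

/-- The curl ∇×F of a vector field. -/
def curl (F : E3 → E3) (x : E3) : E3 :=
  (WithLp.equiv 2 (Fin 3 → ℝ)).symm
    ![pd 1 (fun y => F y 2) x - pd 2 (fun y => F y 1) x,
      pd 2 (fun y => F y 0) x - pd 0 (fun y => F y 2) x,
      pd 0 (fun y => F y 1) x - pd 1 (fun y => F y 0) x]

/-- Directional derivative ∂ₛ f = t·∇f of a scalar function along a vector field t. -/
def ds (t : E3 → E3) (f : E3 → ℝ) (x : E3) : ℝ := dot (t x) (grad f x)

/-- Componentwise directional derivative (u·∇)w of a vector field w along u. -/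
def dirDeriv (u w : E3 → E3) (x : E3) : E3 :=
  (WithLp.equiv 2 (Fin 3 → ℝ)).symm
    ![fderiv ℝ (fun y => w y 0) x (u x),
      fderiv ℝ (fun y => w y 1) x (u x),
      fderiv ℝ (fun y => w y 2) x (u x)]

/-- Helicity density w·(curl w) of a vector field. -/
def hel (w : E3 → E3) (x : E3) : ℝ := dot (w x) (curl w x)

/-- Cross-helicity sum n·(curl b) + b·(curl n). -/
def crossHel (n b : E3 → E3) (x : E3) : ℝ :=
  dot (n x) (curl b x) + dot (b x) (curl n x)

/-- A smooth right-handed orthonormal (Serret–Frenet type) frame on U. -/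
def IsFrameOn (t n b : E3 → E3) (U : Set E3) : Prop :=
  ContDiffOn ℝ (⊤ : ℕ∞) t U ∧ ContDiffOn ℝ (⊤ : ℕ∞) n U ∧ ContDiffOn ℝ (⊤ : ℕ∞) b U ∧
  ∀ x ∈ U, ‖t x‖ = 1 ∧ ‖n x‖ = 1 ∧ ‖b x‖ = 1 ∧
    dot (t x) (n x) = 0 ∧ dot (t x) (b x) = 0 ∧ dot (n x) (b x) = 0 ∧
    b x = cross (t x) (n x)

/-- The divergence of a vector field on ℝ³. -/
def divg (F : E3 → E3) (x : E3) : ℝ :=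
  pd 0 (fun y => F y 0) x + pd 1 (fun y => F y 1) x + pd 2 (fun y => F y 2) x

/-! ### Algebra of dot and cross products -/

lemma dot_eq (u w : E3) : dot u w = u 0 * w 0 + u 1 * w 1 + u 2 * w 2 := by
  simp [dot, Fin.sum_univ_three]

@[simp] lemma cross_zero (u w : E3) : cross u w 0 = u 1 * w 2 - u 2 * w 1 := rfl
@[simp] lemma cross_one (u w : E3) : cross u w 1 = u 2 * w 0 - u 0 * w 2 := rfl
@[simp] lemma cross_two (u w : E3) : cross u w 2 = u 0 * w 1 - u 1 * w 0 := rfl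
@[simp] lemma grad_zero (f : E3 → ℝ) (x : E3) : grad f x 0 = pd 0 f x := rfl
@[simp] lemma grad_one (f : E3 → ℝ) (x : E3) : grad f x 1 = pd 1 f x := rfl
@[simp] lemma grad_two (f : E3 → ℝ) (x : E3) : grad f x 2 = pd 2 f x := rfl
@[simp] lemma curl_zero (F : E3 → E3) (x : E3) :
    curl F x 0 = pd 1 (fun y => F y 2) x - pd 2 (fun y => F y 1) x := rfl
@[simp] lemma curl_one (F : E3 → E3) (x : E3) :
    curl F x 1 = pd 2 (fun y => F y 0) x - pd 0 (fun y => F y 2) x := rfl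
@[simp] lemma curl_two (F : E3 → E3) (x : E3) :
    curl F x 2 = pd 0 (fun y => F y 1) x - pd 1 (fun y => F y 0) x := rfl

lemma dot_self_of_norm {u : E3} (h : ‖u‖ = 1) : dot u u = 1 := by
  have h1 := EuclideanSpace.real_norm_sq_eq u
  rw [h, Fin.sum_univ_three] at h1
  rw [dot_eq]
  linarith

/-- If `a ⟂ J`, then `a × (J × g) = (a·g) J`; this is that identity, paired with `w`,
in the situation `J × g = s t`. -/
lemma smul_dot_cross {a J g t : E3} {s : ℝ} (haJ : dot J a = 0) (h : s • t = cross J g) (w : E3) :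
    s * dot a (cross t w) = dot a g * dot J w := by
  have h0 : s * t 0 = cross J g 0 := by rw [← h]; rfl
  have h1 : s * t 1 = cross J g 1 := by rw [← h]; rfl
  have h2 : s * t 2 = cross J g 2 := by rw [← h]; rfl
  simp only [dot_eq, cross_zero, cross_one, cross_two] at *
  linear_combination (a 1 * -w 2 + a 2 * w 1) * h0 + (a 0 * w 2 - a 2 * w 0) * h1
    + (a 1 * w 0 - a 0 * w 1) * h2 - (g 0 * w 0 + g 1 * w 1 + g 2 * w 2) * haJ

/-! ### Calculus of `pd`, `curl` and `divg` -/

lemma pd_congr {f g : E3 → ℝ} {x : E3} (i : Fin 3) (h : f =ᶠ[nhds x] g) : pd i f x = pd i g x := by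
  rw [pd, pd, h.fderiv_eq]

lemma pd_add {f g : E3 → ℝ} {x : E3} (i : Fin 3) (hf : DifferentiableAt ℝ f x)
    (hg : DifferentiableAt ℝ g x) : pd i (fun y => f y + g y) x = pd i f x + pd i g x := by
  rw [pd, fderiv_fun_add hf hg]; rfl

lemma pd_sub {f g : E3 → ℝ} {x : E3} (i : Fin 3) (hf : DifferentiableAt ℝ f x)
    (hg : DifferentiableAt ℝ g x) : pd i (fun y => f y - g y) x = pd i f x - pd i g x := by
  rw [pd, fderiv_fun_sub hf hg]; rfl

lemma pd_mul {f g : E3 → ℝ} {x : E3} (i : Fin 3) (hf : DifferentiableAt ℝ f x)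
    (hg : DifferentiableAt ℝ g x) :
    pd i (fun y => f y * g y) x = pd i f x * g x + f x * pd i g x := by
  rw [pd, fderiv_fun_mul hf hg]
  simp only [add_apply, smul_apply, smul_eq_mul, pd]
  ring

lemma two_le_smooth : (2 : WithTop ℕ∞) ≤ ((⊤ : ℕ∞) : WithTop ℕ∞) :=
  WithTop.coe_le_coe.2 (le_top : (2 : ℕ∞) ≤ ⊤)

lemma differentiableAt_fderiv {f : E3 → ℝ} {x : E3} (hf : ContDiffAt ℝ (⊤ : ℕ∞) f x) :
    DifferentiableAt ℝ (fderiv ℝ f) x :=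
  (hf.fderiv_right (m := 1) two_le_smooth).differentiableAt (by simp)

lemma differentiableAt_pd {f : E3 → ℝ} {x : E3} (hf : ContDiffAt ℝ (⊤ : ℕ∞) f x) (i : Fin 3) :
    DifferentiableAt ℝ (pd i f) x :=
  (differentiableAt_fderiv hf).clm_apply (differentiableAt_const _)

/-- Symmetry of second partial derivatives. -/
lemma pd_comm {f : E3 → ℝ} {x : E3} (hf : ContDiffAt ℝ (⊤ : ℕ∞) f x) (i j : Fin 3) :
    pd i (pd j f) x = pd j (pd i f) x := by
  have key : ∀ i j : Fin 3, pd i (pd j f) x =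
      fderiv ℝ (fderiv ℝ f) x (EuclideanSpace.single i 1) (EuclideanSpace.single j 1) := by
    intro i j
    change fderiv ℝ (fun y => fderiv ℝ f y (EuclideanSpace.single j 1)) x _ = _
    rw [fderiv_clm_apply (differentiableAt_fderiv hf) (differentiableAt_const _)]
    simp
  rw [key, key]
  have hs : IsSymmSndFDerivAt ℝ f x :=
    hf.isSymmSndFDerivAt (by simp only [minSmoothness_of_isRCLikeNormedField]; exact two_le_smooth)
  exact hs _ _

lemma differentiableAt_coord {F : E3 → E3} {x : E3} (hF : DifferentiableAt ℝ F x) (i : Fin 3) :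
    DifferentiableAt ℝ (fun y => F y i) x :=
  differentiableAt_euclidean.1 hF i

/-- `div (F × ∇H) = curl F · ∇H`, since gradients are curl-free. -/
lemma divg_cross_grad {F : E3 → E3} {H : E3 → ℝ} {x : E3} (hF : DifferentiableAt ℝ F x)
    (hH : ContDiffAt ℝ (⊤ : ℕ∞) H x) :
    divg (fun y => cross (F y) (grad H y)) x = dot (curl F x) (grad H x) := by
  have d := differentiableAt_coord hF
  have e := differentiableAt_pd hH
  have m := fun i j => (d i).fun_mul (e j)
  simp only [divg, cross_zero, cross_one, cross_two, grad_zero, grad_one, grad_two, dot_eq,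
    curl_zero, curl_one, curl_two]
  rw [pd_sub 0 (m 1 2) (m 2 1), pd_sub 1 (m 2 0) (m 0 2), pd_sub 2 (m 0 1) (m 1 0)]
  simp only [pd_mul _ (d _) (e _)]
  rw [pd_comm hH 1 0, pd_comm hH 2 0, pd_comm hH 2 1]
  ring

lemma divg_congr {F G : E3 → E3} {U : Set E3} (hU : IsOpen U) (h : ∀ y ∈ U, F y = G y)
    {x : E3} (hx : x ∈ U) : divg F x = divg G x := by
  have h' : ∀ i : Fin 3, (fun y => F y i) =ᶠ[nhds x] fun y => G y i := fun i => by
    filter_upwards [hU.mem_nhds hx] with y hy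
    rw [h y hy]
  simp only [divg, pd_congr _ (h' _)]

lemma curl_smul {f : E3 → ℝ} {F : E3 → E3} {x : E3} (hf : DifferentiableAt ℝ f x)
    (hF : DifferentiableAt ℝ F x) :
    curl (fun y => f y • F y) x = f x • curl F x + cross (grad f x) (F x) := by
  have d := differentiableAt_coord hF
  ext i
  fin_cases i <;> simp [pd_mul _ hf (d _)] <;> ring

lemma curl_add {F G : E3 → E3} {x : E3} (hF : DifferentiableAt ℝ F x)
    (hG : DifferentiableAt ℝ G x) :
    curl (fun y => F y + G y) x = curl F x + curl G x := by
  have d := differentiableAt_coord hF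
  have e := differentiableAt_coord hG
  ext i
  fin_cases i <;> simp [pd_add _ (d _) (e _)] <;> ring

/-- The Riccati equation makes `J = α (n + μ b)` a Poisson vector: when `b` is Poisson,
`J · curl J = α² (n · curl n + μ Ω_nb - t · ∇μ)`. -/
lemma poisson_of_riccati {t n b : E3 → E3} {α μ : E3 → ℝ} {x : E3}
    (hα : DifferentiableAt ℝ α x) (hμ : DifferentiableAt ℝ μ x)
    (hn : DifferentiableAt ℝ n x) (hb : DifferentiableAt ℝ b x)
    (hnb : cross (n x) (b x) = t x) (hΩb : hel b x = 0)
    (hric : ds t μ x = hel n x + μ x * crossHel n b x) :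
    dot (α x • (n x + μ x • b x)) (curl (fun y => α y • (n y + μ y • b y)) x) = 0 := by
  rw [curl_smul hα (hn.fun_add (hμ.fun_smul hb)), curl_add hn (hμ.fun_smul hb), curl_smul hμ hb]
  simp only [hel, ds, crossHel, ← hnb] at hΩb hric
  generalize curl n x = cn at *
  generalize curl b x = cb at *
  generalize grad μ x = gm at *
  generalize grad α x = ga at *
  simp only [dot_eq, PiLp.add_apply, PiLp.smul_apply, smul_eq_mul, cross_zero, cross_one,
    cross_two] at *
  linear_combination α x ^ 2 * μ x ^ 2 * hΩb - α x ^ 2 * hric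

/-- with Ωᵦ = 0, J = α(n + μb) solving the (linear) Riccati
equation, and a bi-Hamiltonian pair v = J × ∇H₁ = b × ∇H₂, the Poisson vectors
J and b are compatible. -/
theorem degenerate_case_compatibility
    (U : Set E3) (hU : IsOpen U) (t n b : E3 → E3)
    (hframe : IsFrameOn t n b U)
    (hΩb : ∀ x ∈ U, hel b x = 0)
    (α μ : E3 → ℝ)
    (hα : ContDiffOn ℝ (⊤ : ℕ∞) α U) (hμ : ContDiffOn ℝ (⊤ : ℕ∞) μ U)
    (hα0 : ∀ x ∈ U, α x ≠ 0)
    (hric : ∀ x ∈ U, ds t μ x = hel n x + μ x * crossHel n b x)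
    (H₁ H₂ : E3 → ℝ)
    (hH₁ : ContDiffOn ℝ (⊤ : ℕ∞) H₁ U) (hH₂ : ContDiffOn ℝ (⊤ : ℕ∞) H₂ U)
    (v : E3 → E3) (hv : ContDiffOn ℝ (⊤ : ℕ∞) v U) (hv0 : ∀ x ∈ U, v x ≠ 0)
    (hham₁ : ∀ x ∈ U, v x = cross (α x • (n x + μ x • b x)) (grad H₁ x))
    (hham₂ : ∀ x ∈ U, v x = cross (b x) (grad H₂ x))
    (ht : ∀ x ∈ U, t x = ‖v x‖⁻¹ • v x) :
    ∀ x ∈ U,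
      dot (α x • (n x + μ x • b x)) (curl b x)
        + dot (b x) (curl (fun y => α y • (n y + μ y • b y)) x) = 0 := by
  intro x hx
  obtain ⟨-, hns, hbs, hfr⟩ := hframe
  obtain ⟨ht1, hn1, hb1, htn, htb, hnb, hbx⟩ := hfr x hx
  have hUx := hU.mem_nhds hx
  have dα := (hα.contDiffAt hUx).differentiableAt (by simp)
  have dμ := (hμ.contDiffAt hUx).differentiableAt (by simp)
  have dn := (hns.contDiffAt hUx).differentiableAt (by simp)
  have db := (hbs.contDiffAt hUx).differentiableAt (by simp)
  have tt := dot_self_of_norm ht1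
  have nn := dot_self_of_norm hn1
  have bb := dot_self_of_norm hb1
  have hcross : cross (n x) (b x) = t x := by
    rw [hbx]
    simp only [dot_eq] at nn htn
    ext i
    fin_cases i <;> simp only [Fin.zero_eta, Fin.mk_one, Fin.reduceFinMk, cross_zero, cross_one,
      cross_two]
    · linear_combination t x 0 * nn - n x 0 * htn
    · linear_combination t x 1 * nn - n x 1 * htn
    · linear_combination t x 2 * nn - n x 2 * htn
  have htbn : cross (t x) (b x) = - n x := by
    rw [hbx]
    simp only [dot_eq] at tt htn
    ext i
    fin_cases i <;> simp only [Fin.zero_eta, Fin.mk_one, Fin.reduceFinMk, cross_zero, cross_one,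
      cross_two, PiLp.neg_apply]
    · linear_combination -n x 0 * tt + t x 0 * htn
    · linear_combination -n x 1 * tt + t x 1 * htn
    · linear_combination -n x 2 * tt + t x 2 * htn
  have hs : ‖v x‖ ≠ 0 := norm_ne_zero_iff.2 (hv0 x hx)
  have hvt : ‖v x‖ • t x = v x := by rw [ht x hx, smul_smul, mul_inv_cancel₀ hs, one_smul]
  have hJ := poisson_of_riccati dα dμ dn db hcross (hΩb x hx) (hric x hx)
  have hb0 : dot (b x) (curl b x) = 0 := hΩb x hx
  have hk : dot (curl (fun y => α y • (n y + μ y • b y)) x) (grad H₁ x)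
      = dot (curl b x) (grad H₂ x) := by
    rw [← divg_cross_grad (dα.fun_smul (dn.fun_add (dμ.fun_smul db))) (hH₁.contDiffAt hUx),
      ← divg_cross_grad db (hH₂.contDiffAt hUx), ← divg_congr hU hham₁ hx,
      ← divg_congr hU hham₂ hx]
  have e1 := smul_dot_cross hJ (hvt.trans (hham₁ x hx)) (n x)
  have e2 := smul_dot_cross hb0 (hvt.trans (hham₂ x hx)) (b x)
  rw [← hbx, hk] at e1
  rw [htbn, bb] at e2
  generalize curl (fun y => α y • (n y + μ y • b y)) x = a at *
  generalize dot (curl b x) (grad H₂ x) = k at *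
  generalize curl b x = c at *
  refine (mul_eq_zero.1 (?_ : ‖v x‖ * _ = 0)).resolve_left hs
  simp only [dot_eq, PiLp.add_apply, PiLp.smul_apply, PiLp.neg_apply, smul_eq_mul] at *
  linear_combination e1 - α x * e2 + ‖v x‖ * α x * μ x * hb0 + k * α x * nn + k * α x * μ x * hnb
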